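/- Let λ, b ∈ X₀([0,T₀]×D_{R₀}) satisfy Re λ(0,0) > 0, |λ(t,x) − λ(0,x)| ≤ Λ·m(t) and |b(t,x)| ≤ B·m(t)/|log t| on [0,T₀]×D_{R₀} for a weight function m, with 0 < T₀ < 1/e. If v ∈ X₁((0,T₁]×D_{R₁}) is any solution of t·∂v/∂t − λ(t,x)·v − b(t,x)·∂v/∂x = 0 on (0,T₁]×D_{R₁}, then there exist a holomorphic germ ψ at x = 0 and ε, δ > 0 such that v = V(ψ) on (0,ε]×D_δ, where V(ψ) is the unique solution with t^{−λ(0,x)}·V(ψ)(t,x) → ψ(x) uniformly near x = 0 as t → 0⁺; in particular t^{−λ(0,x)}·v(t,x) converges uniformly near x = 0 to a holomorphic function as t → 0⁺. -/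

import Mathlib

open Set Filter MeasureTheory Metric Topology Complex

noncomputable section

/-- A *weight function* on `(0, T₀]`: increasing, continuous and positive on `(0,T₀]`,
with `∫₀^{T₀} m(τ)/τ dτ < ∞`. -/
def IsWeight (T₀ : ℝ) (m : ℝ → ℝ) : Prop :=
  MonotoneOn m (Set.Ioc 0 T₀) ∧ ContinuousOn m (Set.Ioc 0 T₀) ∧
    (∀ t ∈ Set.Ioc (0 : ℝ) T₀, 0 < m t) ∧
    MeasureTheory.IntegrableOn (fun τ => m τ / τ) (Set.Ioc 0 T₀)

/-- `φ(t) = ∫₀ᵗ m(τ)/τ dτ`. -/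
def wphi (m : ℝ → ℝ) (t : ℝ) : ℝ := ∫ τ in Set.Ioc (0 : ℝ) t, m τ / τ

/-- `f ∈ X₀(S × D_R)` : continuous on `S × D_R`, holomorphic in `x` for each fixed `t`. -/
def MemX0 (S : Set ℝ) (R : ℝ) (f : ℝ → ℂ → ℂ) : Prop :=
  ContinuousOn (fun p : ℝ × ℂ => f p.1 p.2) (S ×ˢ Metric.ball (0 : ℂ) R) ∧
    ∀ t ∈ S, DifferentiableOn ℂ (f t) (Metric.ball (0 : ℂ) R)

/-- `f ∈ X₁(S × D_R)` : `f ∈ X₀`, with a `t`-derivative for `t > 0` such that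
`t ∂f/∂t ∈ X₀`. -/
def MemX1 (S : Set ℝ) (R : ℝ) (f : ℝ → ℂ → ℂ) : Prop :=
  MemX0 S R f ∧
    ∃ g : ℝ → ℂ → ℂ, MemX0 S R g ∧
      ∀ t ∈ S, 0 < t → ∀ x ∈ Metric.ball (0 : ℂ) R,
        HasDerivWithinAt (fun s => f s x) (g t x / (t : ℂ)) S t

/-- `u` solves equation (E) :
`t ∂u/∂t = a + λ u + b ∂u/∂x + Σ_{j+α≥2} a_{j,α} u^j (∂u/∂x)^α` on `(0,T] × D_R`. -/
def SolvesE (T R : ℝ) (a lam b : ℝ → ℂ → ℂ) (c : ℕ → ℕ → ℝ → ℂ → ℂ)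
    (u : ℝ → ℂ → ℂ) : Prop :=
  ∀ t ∈ Set.Ioc (0 : ℝ) T, ∀ x ∈ Metric.ball (0 : ℂ) R,
    HasDerivWithinAt (fun s => u s x)
      ((a t x + lam t x * u t x + b t x * deriv (u t) x +
          ∑' p : ℕ × ℕ, c p.1 p.2 t x * u t x ^ p.1 * deriv (u t) x ^ p.2) / (t : ℂ))
      (Set.Ioc 0 T) t

/-- `u` is a germ (near the origin) solution of equation (E). -/
def GermSol (T₀ R₀ : ℝ) (a lam b : ℝ → ℂ → ℂ) (c : ℕ → ℕ → ℝ → ℂ → ℂ)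
    (u : ℝ → ℂ → ℂ) : Prop :=
  ∃ T, 0 < T ∧ T ≤ T₀ ∧ ∃ R, 0 < R ∧ R ≤ R₀ ∧ SolvesE T R a lam b c u

/-- the germ class `X₁^d`. -/
def MemX1d (d : ℝ) (u : ℝ → ℂ → ℂ) : Prop :=
  ∃ T > (0 : ℝ), ∃ R > (0 : ℝ), MemX1 (Set.Icc 0 T) R u ∧
    ∃ C > (0 : ℝ), ∀ t ∈ Set.Icc (0 : ℝ) T, ∀ x ∈ Metric.ball (0 : ℂ) R,
      max ‖u t x‖ ‖deriv (u t) x‖ ≤ C * t ^ d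

/-- the germ class `X₁⁺ = ⋃_{d>0} X₁^d`. -/
def MemX1plus (u : ℝ → ℂ → ℂ) : Prop := ∃ d > (0 : ℝ), MemX1d d u

/-- the germ class `X₁^{(μ)} = ⋂_{0<a<μ} X₁^a`. -/
def MemX1lt (μ : ℝ) (u : ℝ → ℂ → ℂ) : Prop := ∀ a : ℝ, 0 < a → a < μ → MemX1d a u

/-- two functions agree as germs on some `(0,ε] × D_δ`. -/
def GermEqPos (u v : ℝ → ℂ → ℂ) : Prop :=
  ∃ ε > (0 : ℝ), ∃ δ > (0 : ℝ), ∀ t ∈ Set.Ioc (0 : ℝ) ε, ∀ x ∈ Metric.ball (0 : ℂ) δ,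
    u t x = v t x

/-- the class `𝒳₁` (built on `X₁([0,T]×D_R)`) : the limsup-condition
`limsup_{ρ→0⁺} [ lim_{σ→0⁺} (1/ρ²) sup_{(0,σ)×D_ρ} |u| ] = 0`. -/
def MemXscrIcc (u : ℝ → ℂ → ℂ) : Prop :=
  (∃ T > (0 : ℝ), ∃ R > (0 : ℝ), MemX1 (Set.Icc 0 T) R u) ∧
    ∀ ε > (0 : ℝ), ∃ ρ₁ > (0 : ℝ), ∀ ρ, 0 < ρ → ρ < ρ₁ →
      ∃ σ > (0 : ℝ), ∀ t, 0 < t → t < σ → ∀ x ∈ Metric.ball (0 : ℂ) ρ,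
        ‖u t x‖ ≤ ε * ρ ^ 2

/-- the class `𝒳₁` (built on `X₁((0,T]×D_R)`). -/
def MemXscrIoc (u : ℝ → ℂ → ℂ) : Prop :=
  (∃ T > (0 : ℝ), ∃ R > (0 : ℝ), MemX1 (Set.Ioc 0 T) R u) ∧
    ∀ ε > (0 : ℝ), ∃ ρ₁ > (0 : ℝ), ∀ ρ, 0 < ρ → ρ < ρ₁ →
      ∃ σ > (0 : ℝ), ∀ t, 0 < t → t < σ → ∀ x ∈ Metric.ball (0 : ℂ) ρ,
        ‖u t x‖ ≤ ε * ρ ^ 2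

/-- `ψ` is holomorphic in a neighborhood of `x = 0`. -/
def HoloGerm (ψ : ℂ → ℂ) : Prop :=
  ∃ r > (0 : ℝ), DifferentiableOn ℂ ψ (Metric.ball (0 : ℂ) r)

/-- `t^{-λ(0,x)} w(t,x) → ψ(x)` as `t → 0⁺`, uniformly near `x = 0`,
where `t^{-λ(0,x)} = exp(-λ(0,x) log t)`. -/
def BndLimit (lam0 : ℂ → ℂ) (w : ℝ → ℂ → ℂ) (ψ : ℂ → ℂ) : Prop :=
  ∃ δ > (0 : ℝ), TendstoUniformlyOn
    (fun t x => Complex.exp (-(lam0 x) * (Real.log t : ℂ)) * w t x) ψ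
    (nhdsWithin 0 (Set.Ioi 0)) (Metric.ball (0 : ℂ) δ)

/-- `lim_{t→0⁺} sup_{x ∈ D_R} |t^{-d} u(t,x)| = 0`. -/
def SmalloOnBall (d R : ℝ) (u : ℝ → ℂ → ℂ) : Prop :=
  ∀ ε > (0 : ℝ), ∃ τ > (0 : ℝ), ∀ t, 0 < t → t < τ → ∀ x ∈ Metric.ball (0 : ℂ) R,
    ‖u t x‖ ≤ ε * t ^ d

/-- `f ∈ X₀(W)` for a general domain `W ⊆ ℝ × ℂ`. -/
def MemX0W (W : Set (ℝ × ℂ)) (f : ℝ → ℂ → ℂ) : Prop :=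
  ContinuousOn (fun p : ℝ × ℂ => f p.1 p.2) W ∧
    ∀ t : ℝ, DifferentiableOn ℂ (f t) {y : ℂ | (t, y) ∈ W}

/-- `f ∈ X₁(W)` for a general domain `W ⊆ ℝ × ℂ`. -/
def MemX1W (W : Set (ℝ × ℂ)) (f : ℝ → ℂ → ℂ) : Prop :=
  MemX0W W f ∧
    ∃ g : ℝ → ℂ → ℂ, MemX0W W g ∧
      ∀ t x, (t, x) ∈ W → 0 < t →
        HasDerivWithinAt (fun s => f s x) (g t x / (t : ℂ)) {s : ℝ | (s, x) ∈ W} t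

/-- `w` solves `t ∂w/∂t = λ w + b ∂w/∂x + g` on the domain `W`. -/
def SolvesLW (W : Set (ℝ × ℂ)) (lam b g w : ℝ → ℂ → ℂ) : Prop :=
  ∀ t x, (t, x) ∈ W → 0 < t →
    HasDerivWithinAt (fun s => w s x)
      ((lam t x * w t x + b t x * deriv (w t) x + g t x) / (t : ℂ))
      {s : ℝ | (s, x) ∈ W} t

/-- `v` solves the homogeneous linear equation `t ∂v/∂t = λ v + b ∂v/∂x`
on the product domain `S × D_R`. -/
def SolvesLin (S : Set ℝ) (R : ℝ) (lam b : ℝ → ℂ → ℂ) (v : ℝ → ℂ → ℂ) : Prop :=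
  ∀ t ∈ S, 0 < t → ∀ x ∈ Metric.ball (0 : ℂ) R,
    HasDerivWithinAt (fun s => v s x)
      ((lam t x * v t x + b t x * deriv (v t) x) / (t : ℂ)) S t

/-- the characteristic domain `𝒟 = ⋃_{x₀ ∈ D_{R₁}} {(t, φ(t;T,x₀)) : 0 < t ≤ T}`. -/
def Dchar (T R₁ : ℝ) (Φ : ℝ → ℝ → ℂ → ℂ) : Set (ℝ × ℂ) :=
  {p : ℝ × ℂ | p.1 ∈ Set.Ioc (0 : ℝ) T ∧ ∃ x₀ ∈ Metric.ball (0 : ℂ) R₁, p.2 = Φ p.1 T x₀}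

/-- the domain `W = {(t,x) ∈ [0,T] × D_R : φ(t)/r + |x| < R}`. -/
def Wset (m : ℝ → ℝ) (T R r : ℝ) : Set (ℝ × ℂ) :=
  {p : ℝ × ℂ | p.1 ∈ Set.Icc (0 : ℝ) T ∧ p.2 ∈ Metric.ball (0 : ℂ) R ∧
    wphi m p.1 / r + ‖p.2‖ < R}

/-!
The function `u = t ^ (-λ(0, x)) v` satisfies
`t ∂ₜu = (λ - λ(0, x) + b ∂ₓλ(0, x) log t) u + b ∂ₓu`, whose coefficients are all `O(m(t))`. Hence
`‖∂ₜu‖ ≤ k(t) (‖u‖ + ‖∂ₓu‖)` with `k = C m(t) / t` integrable at `0`. The loss of the `x`-derivative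
is absorbed by Nagumo's weighted norm `sup ‖u‖ w`, where `w` is the distance to the boundary of a
disc whose radius shrinks at a speed proportional to `k`. The resulting a priori bound holds in both
directions of time: backwards it shows that `u` stays bounded, and is therefore uniformly Cauchy, as
`t → 0⁺`; forwards it shows that a solution whose limit vanishes is zero.
-/

section RealAnalysis

lemma le_two_mul_of_le_add_half {ι : Type*} {f : ι → ℝ} {A : ℝ} (hf : BddAbove (range f))
    (h : ∀ N, (∀ i, f i ≤ N) → ∀ i, f i ≤ A + N / 2) (i : ι) : f i ≤ 2 * A := by
  have : Nonempty ι := ⟨i⟩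
  have hsup : ⨆ j, f j ≤ A + (⨆ j, f j) / 2 := ciSup_le (h _ (le_ciSup hf))
  linarith [le_ciSup hf i]

lemma hasDerivAt_integral_of_continuousOn_Icc {k : ℝ → ℝ} {a b t : ℝ}
    (hk : ContinuousOn k (Icc a b)) (ht : t ∈ Ioo a b) :
    HasDerivAt (fun s => ∫ τ in a..s, k τ) (k t) t := by
  have hmem : Icc a b ∈ 𝓝 t := Icc_mem_nhds ht.1 ht.2
  refine intervalIntegral.integral_hasDerivAt_right ?_ ?_ (hk.continuousAt hmem)
  · exact (hk.mono (Icc_subset_Icc_right ht.2.le)).intervalIntegrable_of_Icc ht.1.le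
  · exact (hk.mono Ioo_subset_Icc_self).stronglyMeasurableAtFilter isOpen_Ioo t ht

lemma integral_le_integral_of_subinterval {k : ℝ → ℝ} {a s t b : ℝ} (has : a ≤ s) (hst : s ≤ t)
    (htb : t ≤ b) (hint : IntegrableOn k (Ioc a b)) (hk : ∀ τ ∈ Ioc a b, 0 ≤ k τ) :
    ∫ τ in s..t, k τ ≤ ∫ τ in a..b, k τ :=
  intervalIntegral.integral_mono_interval has hst htb
    ((ae_restrict_iff' measurableSet_Ioc).2 (.of_forall hk))
    ((intervalIntegrable_iff_integrableOn_Ioc_of_le (has.trans (hst.trans htb))).2 hint)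

lemma tendsto_integral_nhdsGT {k : ℝ → ℝ} {a b : ℝ} (hab : a < b)
    (hint : IntegrableOn k (Ioc a b)) :
    Tendsto (fun t => ∫ τ in a..t, k τ) (𝓝[>] a) (𝓝 0) := by
  have hcont := intervalIntegral.continuousOn_primitive_interval'
    ((intervalIntegrable_iff_integrableOn_Ioc_of_le hab.le).2 hint) left_mem_uIcc a left_mem_uIcc
  rw [ContinuousWithinAt, intervalIntegral.integral_same, uIcc_of_le hab.le] at hcont
  rw [← nhdsWithin_Ioc_eq_nhdsGT hab]
  exact hcont.mono_left (nhdsWithin_mono _ Ioc_subset_Icc_self)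

lemma exists_forall_integral_le {k : ℝ → ℝ} {a b ε : ℝ} (hab : a < b)
    (hint : IntegrableOn k (Ioc a b)) (hk : ∀ τ ∈ Ioc a b, 0 ≤ k τ) (hε : 0 < ε) :
    ∃ b' ∈ Ioc a b, ∀ s t, a ≤ s → s ≤ t → t ≤ b' → ∫ τ in s..t, k τ ≤ ε := by
  obtain ⟨b', hsmall, hb'⟩ := (((tendsto_integral_nhdsGT hab hint).eventually
    (gt_mem_nhds hε)).and (Ioc_mem_nhdsGT hab)).exists
  have hsub : Ioc a b' ⊆ Ioc a b := Ioc_subset_Ioc_right hb'.2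
  exact ⟨b', hb', fun s t has hst htb => (integral_le_integral_of_subinterval has hst htb
    (hint.mono_set hsub) fun τ hτ => hk τ (hsub hτ)).trans hsmall.le⟩

lemma uniformCauchySeqOn_nhdsGT_of_norm_sub_le {X E : Type*} [SeminormedAddCommGroup E]
    {u : ℝ → X → E} {g : ℝ → ℝ} {s : Set X} {a b : ℝ} (hab : a < b)
    (hg : Tendsto g (𝓝[>] a) (𝓝 0))
    (hu : ∀ σ ∈ Ioc a b, ∀ τ ∈ Ioc a b, σ ≤ τ → ∀ x ∈ s, ‖u τ x - u σ x‖ ≤ g τ) :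
    UniformCauchySeqOn u (𝓝[>] a) s := by
  intro V hV
  obtain ⟨ε, hε, hεV⟩ := Metric.mem_uniformity_dist.1 hV
  have hsmall : ∀ᶠ t in 𝓝[>] a, g t < ε ∧ t ∈ Ioc a b :=
    (hg.eventually (gt_mem_nhds hε)).and (Ioc_mem_nhdsGT hab)
  filter_upwards [hsmall.prod_mk hsmall] with ⟨σ, τ⟩ ⟨hσ, hτ⟩ x hx
  apply hεV
  rcases le_total σ τ with h | h
  · rw [dist_comm, dist_eq_norm]
    exact (hu σ hσ.2 τ hτ.2 h x hx).trans_lt hτ.1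
  · rw [dist_eq_norm]
    exact (hu τ hτ.2 σ hσ.2 h x hx).trans_lt hσ.1

lemma exists_tendstoUniformlyOn_of_uniformCauchySeqOn {ι X E : Type*} [UniformSpace E]
    [CompleteSpace E] {u : ι → X → E} {l : Filter ι} [l.NeBot] {s : Set X}
    (hu : UniformCauchySeqOn u l s) : ∃ ψ, TendstoUniformlyOn u ψ l s := by
  have hlim : ∀ x, ∃ y, x ∈ s → Tendsto (u · x) l (𝓝 y) := fun x => by
    by_cases hx : x ∈ s
    · exact (CompleteSpace.complete (hu.cauchy_map hx)).imp fun _ hy _ => hy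
    · exact ⟨u (Classical.choice l.nonempty_of_neBot) x, fun h => absurd h hx⟩
  choose ψ hψ using hlim
  exact ⟨ψ, hu.tendstoUniformlyOn_of_tendsto hψ⟩

end RealAnalysis

section CauchyEstimate

variable {E : Type*} [NormedAddCommGroup E] [NormedSpace ℂ E] {f : ℂ → E} {c x : ℂ} {r N : ℝ}

lemma norm_deriv_le_of_norm_mul_boundary_dist_le (hf : DifferentiableOn ℂ f (ball c r))
    (hN : ∀ y ∈ ball c r, ‖f y‖ * (r - dist y c) ≤ N) (hx : x ∈ ball c r) :
    ‖deriv f x‖ ≤ 4 * N / (r - dist x c) ^ 2 := by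
  set d := r - dist x c
  have hd0 : 0 < d := sub_pos.2 hx
  have hdist : ∀ y ∈ closedBall x (d / 2), dist y c ≤ r - d / 2 := fun y hy => by
    linarith [dist_triangle y x c, mem_closedBall.1 hy]
  have hsub : closedBall x (d / 2) ⊆ ball c r := fun y hy => by
    rw [mem_ball]; linarith [hdist y hy]
  have hsphere : ∀ y ∈ sphere x (d / 2), ‖f y‖ ≤ N / (d / 2) := fun y hy => by
    have hy' := sphere_subset_closedBall hy
    rw [le_div_iff₀ (half_pos hd0)]
    refine le_trans ?_ (hN y (hsub hy'))
    gcongr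
    linarith [hdist y hy']
  calc ‖deriv f x‖ ≤ N / (d / 2) / (d / 2) :=
        Complex.norm_deriv_le_of_forall_mem_sphere_norm_le (half_pos hd0)
          (hf.mono hsub |>.diffContOnCl_ball subset_rfl) hsphere
    _ = 4 * N / d ^ 2 := by field_simp; norm_num

lemma norm_add_norm_deriv_le_of_norm_mul_boundary_dist_le (hf : DifferentiableOn ℂ f (ball c r))
    (hN : ∀ y ∈ ball c r, ‖f y‖ * (r - dist y c) ≤ N) (hx : x ∈ ball c r) :
    ‖f x‖ + ‖deriv f x‖ ≤ (4 + r) * N / (r - dist x c) ^ 2 := by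
  have hderiv := norm_deriv_le_of_norm_mul_boundary_dist_le hf hN hx
  set d := r - dist x c
  have hd0 : 0 < d := sub_pos.2 hx
  have hvalue : ‖f x‖ ≤ r * N / d ^ 2 := by
    rw [le_div_iff₀ (by positivity)]
    calc ‖f x‖ * d ^ 2 = d * (‖f x‖ * d) := by ring
      _ ≤ r * N := by
        have hdr : d ≤ r := sub_le_self r dist_nonneg
        exact mul_le_mul hdr (hN x hx) (by positivity) (hd0.le.trans hdr)
  calc ‖f x‖ + ‖deriv f x‖ ≤ r * N / d ^ 2 + 4 * N / d ^ 2 := add_le_add hvalue hderiv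
    _ = (4 + r) * N / d ^ 2 := by ring

lemma exists_norm_deriv_le_of_differentiableOn_ball [CompleteSpace E] {R : ℝ}
    (hf : DifferentiableOn ℂ f (ball c R)) (hr : r < R) :
    ∃ L, ∀ x ∈ ball c r, ‖deriv f x‖ ≤ L := by
  obtain ⟨L, hL⟩ := (isCompact_closedBall c r).exists_bound_of_continuousOn
    ((hf.deriv isOpen_ball).continuousOn.mono (closedBall_subset_ball hr))
  exact ⟨L, fun x hx => hL x (ball_subset_closedBall hx)⟩

end CauchyEstimate

section Nagumo

variable {E : Type*} [NormedAddCommGroup E] [NormedSpace ℂ E]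

/-- The differential inequality `‖∂ₜu‖ ≤ k(t) (‖u‖ + ‖∂ₓu‖)` on `S × D_R(c)`, with a
continuous rate `k ≥ 0`, for a continuous function `u` that is holomorphic in `x`. -/
structure NagumoBound (S : Set ℝ) (c : ℂ) (R : ℝ) (k : ℝ → ℝ) (u : ℝ → ℂ → E) : Prop where
  rate_continuousOn : ContinuousOn k S
  rate_nonneg : ∀ t ∈ S, 0 ≤ k t
  continuousOn : ContinuousOn (fun p : ℝ × ℂ => u p.1 p.2) (S ×ˢ ball c R)
  differentiableOn : ∀ t ∈ S, DifferentiableOn ℂ (u t) (ball c R)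
  exists_hasDerivWithinAt : ∀ t ∈ S, ∀ x ∈ ball c R, ∃ u' : E,
    HasDerivWithinAt (fun s => u s x) u' S t ∧ ‖u'‖ ≤ k t * (‖u t x‖ + ‖deriv (u t) x‖)

/-- The distance from `x` to the boundary of a disc around `c` that has radius `r` at time `a` and
shrinks at speed `2 (4 + r) k`. The factor `4 + r` comes from the Cauchy estimate in the weighted
norm, and the factor `2` makes the resulting inequality a contraction. -/
def nagumoWeight (k : ℝ → ℝ) (a r : ℝ) (c : ℂ) (t : ℝ) (x : ℂ) : ℝ :=
  r - dist x c - 2 * (4 + r) * ∫ τ in a..t, k τ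

variable {a b t r R M N : ℝ} {c x : ℂ} {k : ℝ → ℝ} {u : ℝ → ℂ → E}

lemma hasDerivAt_nagumoWeight (hk : ContinuousOn k (Icc a b)) (ht : t ∈ Ioo a b) :
    HasDerivAt (nagumoWeight k a r c · x) (-(2 * (4 + r) * k t)) t :=
  ((hasDerivAt_integral_of_continuousOn_Icc hk ht).const_mul _).const_sub _

lemma continuousOn_nagumoWeight (hk : ContinuousOn k (Icc a b)) :
    ContinuousOn (nagumoWeight k a r c · x) (Icc a b) := by
  have hprim : ContinuousOn (fun t => ∫ τ in a..t, k τ) (Icc a b) := by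
    rcases le_or_gt a b with hab | hab
    · rw [← uIcc_of_le hab] at hk ⊢
      exact intervalIntegral.continuousOn_primitive_interval
        (hk.integrableOn_compact isCompact_uIcc)
    · simp [Icc_eq_empty_of_lt hab]
  exact continuousOn_const.sub (continuousOn_const.mul hprim)

lemma nagumoWeight_self : nagumoWeight k a r c a x = r - dist x c := by
  simp [nagumoWeight]

lemma nagumoWeight_antitoneOn (hr : 0 ≤ r) (hk : ContinuousOn k (Icc a b))
    (hk0 : ∀ s ∈ Icc a b, 0 ≤ k s) : AntitoneOn (nagumoWeight k a r c · x) (Icc a b) := by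
  refine antitoneOn_of_hasDerivWithinAt_nonpos (convex_Icc a b) (continuousOn_nagumoWeight hk)
    (f' := fun s => -(2 * (4 + r) * k s)) (fun s hs => ?_) fun s hs => ?_
  · exact (hasDerivAt_nagumoWeight hk (interior_Icc (a := a) ▸ hs)).hasDerivWithinAt
  · have := hk0 s (interior_subset hs)
    have : 0 ≤ 2 * (4 + r) * k s := by positivity
    linarith

/-- Along a fixed `x`, the weighted Cauchy estimate integrates exactly, since
`k / w ^ 2` is a multiple of the derivative of `1 / w` for the weight `w`. -/
lemma integral_mul_div_nagumoWeight_sq (hab : a ≤ b) (hk : ContinuousOn k (Icc a b))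
    (hw : ∀ s ∈ Icc a b, 0 < nagumoWeight k a r c s x) :
    ∫ s in a..b, k s * ((4 + r) * N / nagumoWeight k a r c s x ^ 2) =
      N / 2 / nagumoWeight k a r c b x - N / 2 / nagumoWeight k a r c a x := by
  have hcont := continuousOn_nagumoWeight (r := r) (c := c) (x := x) hk
  refine intervalIntegral.integral_eq_sub_of_hasDerivAt_of_le hab
    (f := fun s => N / 2 / nagumoWeight k a r c s x)
    (continuousOn_const.div hcont fun s hs => (hw s hs).ne') (fun s hs => ?_) ?_
  · have hws := hw s (Ioo_subset_Icc_self hs)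
    refine (((hasDerivAt_nagumoWeight hk hs).fun_inv hws.ne').const_mul (N / 2)).congr_deriv ?_
    ring
  · exact (hk.mul (continuousOn_const.div (hcont.pow 2) fun s hs =>
      (pow_pos (hw s hs) 2).ne')).intervalIntegrable_of_Icc hab

namespace NagumoBound

lemma mono {S S' : Set ℝ} {R' : ℝ} (hu : NagumoBound S c R k u) (hS : S' ⊆ S) (hR : R' ≤ R) :
    NagumoBound S' c R' k u where
  rate_continuousOn := hu.rate_continuousOn.mono hS
  rate_nonneg t ht := hu.rate_nonneg t (hS ht)
  continuousOn := hu.continuousOn.mono (prod_mono hS (ball_subset_ball hR))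
  differentiableOn t ht := (hu.differentiableOn t (hS ht)).mono (ball_subset_ball hR)
  exists_hasDerivWithinAt t ht x hx :=
    (hu.exists_hasDerivWithinAt t (hS ht) x (ball_subset_ball hR hx)).imp
      fun _ h => ⟨h.1.mono hS, h.2⟩

lemma comp_neg (hu : NagumoBound (Icc a b) c R k u) :
    NagumoBound (Icc (-b) (-a)) c R (fun t => k (-t)) fun t => u (-t) := by
  have hmaps : MapsTo Neg.neg (Icc (-b) (-a)) (Icc a b) := fun t ht =>
    ⟨le_neg.1 ht.2, neg_le.1 ht.1⟩
  refine ⟨hu.rate_continuousOn.comp continuous_neg.continuousOn hmaps,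
    fun t ht => hu.rate_nonneg _ (hmaps ht),
    hu.continuousOn.comp (f := fun p : ℝ × ℂ => (-p.1, p.2)) (by fun_prop)
      fun p hp => ⟨hmaps hp.1, hp.2⟩,
    fun t ht => hu.differentiableOn _ (hmaps ht), fun t ht x hx => ?_⟩
  obtain ⟨u', hderiv, hbound⟩ := hu.exists_hasDerivWithinAt _ (hmaps ht) x hx
  refine ⟨-u', ?_, by rwa [norm_neg]⟩
  simpa [Function.comp_def] using
    HasDerivWithinAt.scomp t hderiv (hasDerivAt_neg t).hasDerivWithinAt hmaps

lemma exists_norm_le (hu : NagumoBound (Icc a b) c R k u) (hr : r < R) :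
    ∃ A, ∀ t ∈ Icc a b, ∀ x ∈ closedBall c r, ‖u t x‖ ≤ A := by
  obtain ⟨A, hA⟩ := (isCompact_Icc.prod (isCompact_closedBall c r)).exists_bound_of_continuousOn
    (hu.continuousOn.mono (prod_mono_right (closedBall_subset_ball hr)))
  exact ⟨A, fun t ht x hx => hA (t, x) ⟨ht, hx⟩⟩

lemma norm_sub_le_integral {h : ℝ → ℝ} (hab : a ≤ b) (hu : NagumoBound (Icc a b) c R k u)
    (hx : x ∈ ball c R) (hh : ∀ t ∈ Icc a b, ‖u t x‖ + ‖deriv (u t) x‖ ≤ h t)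
    (hint : IntervalIntegrable (fun t => k t * h t) volume a b) :
    ‖u b x - u a x‖ ≤ ∫ t in a..b, k t * h t := by
  choose! u' hu' hbound using fun t ht => hu.exists_hasDerivWithinAt t ht x hx
  have hderiv : ∀ t ∈ Ioo a b, HasDerivAt (fun s => u s x) (u' t) t := fun t ht =>
    (hu' t (Ioo_subset_Icc_self ht)).hasDerivAt (Icc_mem_nhds ht.1 ht.2)
  refine norm_sub_le_integral_of_norm_deriv_le_of_le hab (f := fun s => u s x)
    (fun t ht => (hu' t ht).continuousWithinAt)
    (fun t ht => (hderiv t ht).differentiableAt.differentiableWithinAt)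
    (.of_forall fun t ht => ?_) hint
  have ht' := Ioo_subset_Icc_self ht
  rw [(hderiv t ht).deriv]
  exact (hbound t ht').trans (mul_le_mul_of_nonneg_left (hh t ht') (hu.rate_nonneg t ht'))

lemma norm_add_norm_deriv_le_div_nagumoWeight_sq (hu : NagumoBound (Icc a b) c r k u)
    (hr : 0 ≤ r) (ht : t ∈ Icc a b)
    (hN : ∀ y, 0 < nagumoWeight k a r c t y → ‖u t y‖ * nagumoWeight k a r c t y ≤ N)
    (hw : 0 < nagumoWeight k a r c t x) :
    ‖u t x‖ + ‖deriv (u t) x‖ ≤ (4 + r) * N / nagumoWeight k a r c t x ^ 2 := by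
  have hN0 : 0 ≤ N := (mul_nonneg (norm_nonneg _) hw.le).trans (hN x hw)
  set ρ := r - 2 * (4 + r) * ∫ τ in a..t, k τ
  have hweight : ∀ y, nagumoWeight k a r c t y = ρ - dist y c := fun y => sub_right_comm _ _ _
  have hρr : ρ ≤ r := by
    have : 0 ≤ ∫ τ in a..t, k τ := intervalIntegral.integral_nonneg ht.1 fun τ hτ =>
      hu.rate_nonneg τ ⟨hτ.1, hτ.2.trans ht.2⟩
    exact sub_le_self r (by positivity)
  simp only [hweight, sub_pos] at hN hw ⊢
  calc ‖u t x‖ + ‖deriv (u t) x‖ ≤ (4 + ρ) * N / (ρ - dist x c) ^ 2 :=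
        norm_add_norm_deriv_le_of_norm_mul_boundary_dist_le
          ((hu.differentiableOn t ht).mono (ball_subset_ball hρr)) hN hw
    _ ≤ (4 + r) * N / (ρ - dist x c) ^ 2 := by gcongr

/-- The contraction step: a weighted bound `N` feeds back, through the Cauchy estimate and
integration in `t`, into a weighted bound with `N / 2`. -/
lemma norm_mul_nagumoWeight_le_add_half (hu : NagumoBound (Icc a b) c r k u) (hr : 0 ≤ r)
    (hM : ∀ x ∈ ball c r, ‖u a x‖ ≤ M)
    (hN : ∀ t ∈ Icc a b, ∀ x, 0 < nagumoWeight k a r c t x →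
      ‖u t x‖ * nagumoWeight k a r c t x ≤ N)
    (ht : t ∈ Icc a b) (hw : 0 < nagumoWeight k a r c t x) :
    ‖u t x‖ * nagumoWeight k a r c t x ≤ M * r + N / 2 := by
  have hut := hu.mono (Icc_subset_Icc_right ht.2) le_rfl
  have hanti : AntitoneOn (nagumoWeight k a r c · x) (Icc a t) :=
    nagumoWeight_antitoneOn hr hut.rate_continuousOn hut.rate_nonneg
  have hat : a ∈ Icc a t := left_mem_Icc.2 ht.1
  have htt : t ∈ Icc a t := right_mem_Icc.2 ht.1
  have hw_pos : ∀ s ∈ Icc a t, 0 < nagumoWeight k a r c s x := fun s hs =>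
    hw.trans_le (hanti hs htt hs.2)
  have hxr : x ∈ ball c r := by simpa [nagumoWeight_self] using hw_pos a hat
  have hM0 : 0 ≤ M := (norm_nonneg _).trans (hM x hxr)
  have hN0 : 0 ≤ N := (mul_nonneg (norm_nonneg _) hw.le).trans (hN t ht x hw)
  have hwr : nagumoWeight k a r c t x ≤ r :=
    (hanti hat htt ht.1).trans (nagumoWeight_self.trans_le (sub_le_self r dist_nonneg))
  have hint : ContinuousOn (fun s => k s * ((4 + r) * N / nagumoWeight k a r c s x ^ 2))
      (Icc a t) :=
    hut.rate_continuousOn.mul (continuousOn_const.div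
      ((continuousOn_nagumoWeight hut.rate_continuousOn).pow 2) fun s hs =>
        (pow_pos (hw_pos s hs) 2).ne')
  have hincr : ‖u t x - u a x‖ ≤
      N / 2 / nagumoWeight k a r c t x - N / 2 / nagumoWeight k a r c a x := by
    rw [← integral_mul_div_nagumoWeight_sq ht.1 hut.rate_continuousOn hw_pos]
    exact hut.norm_sub_le_integral ht.1 hxr (fun s hs =>
      hut.norm_add_norm_deriv_le_div_nagumoWeight_sq hr hs (hN s ⟨hs.1, hs.2.trans ht.2⟩)
        (hw_pos s hs)) (hint.intervalIntegrable_of_Icc ht.1)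
  have hnorm : ‖u t x‖ ≤ M + N / 2 / nagumoWeight k a r c t x := by
    have : 0 ≤ N / 2 / nagumoWeight k a r c a x :=
      div_nonneg (div_nonneg hN0 zero_le_two) (hw_pos a hat).le
    linarith [norm_le_norm_add_norm_sub' (u t x) (u a x), hM x hxr]
  calc ‖u t x‖ * nagumoWeight k a r c t x
      ≤ (M + N / 2 / nagumoWeight k a r c t x) * nagumoWeight k a r c t x := by gcongr
    _ = M * nagumoWeight k a r c t x + N / 2 := by rw [add_mul, div_mul_cancel₀ _ hw.ne']
    _ ≤ M * r + N / 2 := by gcongr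

lemma norm_mul_nagumoWeight_le (hu : NagumoBound (Icc a b) c R k u) (hr : 0 ≤ r) (hrR : r < R)
    (hM : ∀ x ∈ ball c r, ‖u a x‖ ≤ M) (ht : t ∈ Icc a b)
    (hw : 0 < nagumoWeight k a r c t x) :
    ‖u t x‖ * nagumoWeight k a r c t x ≤ 2 * (M * r) := by
  obtain ⟨A, hA⟩ := hu.exists_norm_le hrR
  let P := {p : ℝ × ℂ // p.1 ∈ Icc a b ∧ 0 < nagumoWeight k a r c p.1 p.2}
  let f : P → ℝ := fun p => ‖u p.1.1 p.1.2‖ * nagumoWeight k a r c p.1.1 p.1.2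
  have hbdd : BddAbove (range f) := by
    refine ⟨A * r, ?_⟩
    rintro _ ⟨⟨⟨s, y⟩, hs, hy⟩, rfl⟩
    have hwr : nagumoWeight k a r c s y ≤ r - dist y c :=
      nagumoWeight_self (k := k) ▸ nagumoWeight_antitoneOn hr hu.rate_continuousOn hu.rate_nonneg
        ⟨le_rfl, hs.1.trans hs.2⟩ hs hs.1
    have hA' := hA s hs y (by rw [mem_closedBall]; linarith)
    exact mul_le_mul hA' (hwr.trans (sub_le_self r dist_nonneg)) hy.le ((norm_nonneg _).trans hA')
  exact le_two_mul_of_le_add_half hbdd (fun N hN p =>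
    (hu.mono subset_rfl hrR.le).norm_mul_nagumoWeight_le_add_half hr hM
      (fun s hs y hy => hN ⟨(s, y), hs, hy⟩) p.2.1 p.2.2) ⟨(t, x), ht, hw⟩

/-- The condition `8 (4 + r) ∫ k ≤ r` keeps the weight above `r / 2` when `‖x - c‖ ≤ r / 4`. -/
theorem norm_le_of_norm_left_le (hu : NagumoBound (Icc a b) c R k u) (hr : 0 < r) (hrR : r < R)
    (hsmall : 8 * (4 + r) * ∫ τ in a..b, k τ ≤ r) (hM : ∀ x ∈ ball c r, ‖u a x‖ ≤ M)
    (ht : t ∈ Icc a b) (hx : x ∈ closedBall c (r / 4)) : ‖u t x‖ ≤ 4 * M := by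
  have hw : r / 2 ≤ nagumoWeight k a r c t x := by
    have hle : ∫ τ in a..t, k τ ≤ ∫ τ in a..b, k τ :=
      integral_le_integral_of_subinterval le_rfl ht.1 ht.2
        (hu.rate_continuousOn.integrableOn_Icc.mono_set Ioc_subset_Icc_self)
        fun τ hτ => hu.rate_nonneg τ (Ioc_subset_Icc_self hτ)
    have : 8 * (4 + r) * ∫ τ in a..t, k τ ≤ r := hsmall.trans' (by gcongr)
    rw [nagumoWeight]
    linarith [mem_closedBall.1 hx]
  refine le_of_mul_le_mul_right ?_ (half_pos hr)
  calc ‖u t x‖ * (r / 2) ≤ ‖u t x‖ * nagumoWeight k a r c t x := by gcongr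
    _ ≤ 2 * (M * r) := hu.norm_mul_nagumoWeight_le hr.le hrR hM ht (hw.trans_lt' (half_pos hr))
    _ = 4 * M * (r / 2) := by ring

theorem norm_le_of_norm_right_le (hu : NagumoBound (Icc a b) c R k u) (hr : 0 < r) (hrR : r < R)
    (hsmall : 8 * (4 + r) * ∫ τ in a..b, k τ ≤ r) (hM : ∀ x ∈ ball c r, ‖u b x‖ ≤ M)
    (ht : t ∈ Icc a b) (hx : x ∈ closedBall c (r / 4)) : ‖u t x‖ ≤ 4 * M := by
  simpa using hu.comp_neg.norm_le_of_norm_left_le hr hrR (t := -t)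
    (by simpa [intervalIntegral.integral_comp_neg] using hsmall) (by simpa using hM)
    ⟨neg_le_neg ht.2, neg_le_neg ht.1⟩ hx

lemma norm_sub_le_of_norm_le (hab : a ≤ b) (hu : NagumoBound (Icc a b) c R k u) (hr : 0 < r)
    (hrR : r < R) (hM : ∀ t ∈ Icc a b, ∀ x ∈ closedBall c r, ‖u t x‖ ≤ M)
    (hx : x ∈ closedBall c (r / 2)) :
    ‖u b x - u a x‖ ≤ (M + M / (r / 2)) * ∫ t in a..b, k t := by
  have hsub : closedBall x (r / 2) ⊆ closedBall c r :=
    closedBall_subset_closedBall' (by linarith [mem_closedBall.1 hx])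
  have hbound : ∀ t ∈ Icc a b, ‖u t x‖ + ‖deriv (u t) x‖ ≤ M + M / (r / 2) := fun t ht =>
    add_le_add (hM t ht x (hsub (mem_closedBall_self (half_pos hr).le)))
      (Complex.norm_deriv_le_of_forall_mem_sphere_norm_le (half_pos hr)
        (((hu.differentiableOn t ht).mono
          (hsub.trans (closedBall_subset_ball hrR))).diffContOnCl_ball subset_rfl)
        fun y hy => hM t ht y (hsub (sphere_subset_closedBall hy)))
  have hxR : x ∈ ball c R := mem_ball.2 (by linarith [mem_closedBall.1 hx])
  rw [mul_comm, ← intervalIntegral.integral_mul_const]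
  exact hu.norm_sub_le_integral hab hxR hbound
    ((hu.rate_continuousOn.mul continuousOn_const).intervalIntegrable_of_Icc hab)

lemma exists_norm_le_near_left (hab : a < b) (hu : NagumoBound (Ioc a b) c R k u)
    (hint : IntegrableOn k (Ioc a b)) (hR : 0 < R) :
    ∃ b' ∈ Ioc a b, ∃ r ∈ Ioo 0 R, ∃ M, ∀ t ∈ Ioc a b', ∀ x ∈ closedBall c r, ‖u t x‖ ≤ M := by
  obtain ⟨b', hb', hsmall⟩ := exists_forall_integral_le hab hint hu.rate_nonneg
    (ε := R / 2 / (8 * (4 + R / 2))) (by positivity)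
  have hsub : ∀ s, a < s → Icc s b' ⊆ Ioc a b := fun s hs τ hτ =>
    ⟨hs.trans_le hτ.1, hτ.2.trans hb'.2⟩
  obtain ⟨A, hA⟩ := (hu.mono (hsub b' hb'.1) le_rfl).exists_norm_le (half_lt_self hR)
  refine ⟨b', hb', R / 2 / 4, ⟨by positivity, by linarith⟩, 4 * A, fun t ht x hx => ?_⟩
  exact (hu.mono (hsub t ht.1) le_rfl).norm_le_of_norm_right_le (half_pos hR) (half_lt_self hR)
    ((le_div_iff₀' (by positivity)).1 (hsmall t b' ht.1.le ht.2 le_rfl))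
    (fun y hy => hA b' ⟨le_rfl, le_rfl⟩ y (ball_subset_closedBall hy)) ⟨le_rfl, ht.2⟩ hx

theorem exists_tendstoUniformlyOn [CompleteSpace E] (hab : a < b)
    (hu : NagumoBound (Ioc a b) c R k u) (hint : IntegrableOn k (Ioc a b)) (hR : 0 < R) :
    ∃ δ > 0, ∃ ψ : ℂ → E, DifferentiableOn ℂ ψ (ball c δ) ∧
      TendstoUniformlyOn u ψ (𝓝[>] a) (ball c δ) := by
  obtain ⟨b', hb', r, hr, M, hM⟩ := hu.exists_norm_le_near_left hab hint hR
  have hsub : Ioc a b' ⊆ Ioc a b := Ioc_subset_Ioc_right hb'.2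
  have hM0 : 0 ≤ M := (norm_nonneg _).trans
    (hM b' (right_mem_Ioc.2 hb'.1) c (mem_closedBall_self hr.1.le))
  have hrate : Tendsto (fun t => (M + M / (r / 2)) * ∫ τ in a..t, k τ) (𝓝[>] a) (𝓝 0) := by
    simpa using (tendsto_integral_nhdsGT hab hint).const_mul (M + M / (r / 2))
  have hcauchy : UniformCauchySeqOn u (𝓝[>] a) (ball c (r / 2)) := by
    refine uniformCauchySeqOn_nhdsGT_of_norm_sub_le hb'.1 hrate fun s hs t ht hst x hx => ?_
    have hst_sub : Icc s t ⊆ Ioc a b' := fun τ hτ => ⟨hs.1.trans_le hτ.1, hτ.2.trans ht.2⟩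
    calc ‖u t x - u s x‖ ≤ (M + M / (r / 2)) * ∫ τ in s..t, k τ :=
          (hu.mono (hst_sub.trans hsub) le_rfl).norm_sub_le_of_norm_le hst hr.1 hr.2
            (fun τ hτ => hM τ (hst_sub hτ)) (ball_subset_closedBall hx)
      _ ≤ (M + M / (r / 2)) * ∫ τ in a..t, k τ := by
          have hr0 := hr.1
          have hat : Ioc a t ⊆ Ioc a b := Ioc_subset_Ioc_right (ht.2.trans hb'.2)
          gcongr
          exact integral_le_integral_of_subinterval hs.1.le hst le_rfl (hint.mono_set hat)
            fun τ hτ => hu.rate_nonneg τ (hat hτ)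
  obtain ⟨ψ, hψ⟩ := exists_tendstoUniformlyOn_of_uniformCauchySeqOn hcauchy
  refine ⟨r / 2, half_pos hr.1, ψ, ?_, hψ⟩
  refine hψ.tendstoLocallyUniformlyOn.differentiableOn ?_ isOpen_ball
  filter_upwards [Ioc_mem_nhdsGT hab] with t ht
  exact (hu.differentiableOn t ht).mono (ball_subset_ball (by linarith [hr.1, hr.2]))

theorem exists_forall_eq_zero (hab : a < b) (hu : NagumoBound (Ioc a b) c R k u)
    (hint : IntegrableOn k (Ioc a b)) (hR : 0 < R)
    (hlim : TendstoUniformlyOn u 0 (𝓝[>] a) (ball c R)) :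
    ∃ b' ∈ Ioc a b, ∃ δ > 0, ∀ t ∈ Ioc a b', ∀ x ∈ ball c δ, u t x = 0 := by
  obtain ⟨b', hb', hsmall⟩ := exists_forall_integral_le hab hint hu.rate_nonneg
    (ε := R / 2 / (8 * (4 + R / 2))) (by positivity)
  refine ⟨b', hb', R / 2 / 4, by positivity, fun t ht x hx => norm_le_zero_iff.1 ?_⟩
  refine le_of_forall_pos_le_add fun ε hε => ?_
  obtain ⟨s, hsε, hs⟩ := ((Metric.tendstoUniformlyOn_iff.1 hlim (ε / 4) (by positivity)).and
    (Ioc_mem_nhdsGT ht.1)).exists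
  have hsub : Icc s t ⊆ Ioc a b := fun τ hτ =>
    ⟨hs.1.trans_le hτ.1, hτ.2.trans (ht.2.trans hb'.2)⟩
  have hle := (hu.mono hsub le_rfl).norm_le_of_norm_left_le (half_pos hR) (half_lt_self hR)
    ((le_div_iff₀' (by positivity)).1 (hsmall s t hs.1.le hs.2 ht.2))
    (fun y hy => by simpa using (hsε y (ball_subset_ball (half_le_self hR.le) hy)).le)
    (right_mem_Icc.2 hs.2) (ball_subset_closedBall hx)
  linarith

end NagumoBound

end Nagumo

section LinearEquation

variable {S S' : Set ℝ} {t T R R' B L Λ : ℝ} {x : ℂ} {m : ℝ → ℝ} {μ : ℂ → ℂ}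
  {f g lam b v w : ℝ → ℂ → ℂ}

lemma MemX0.mono (hf : MemX0 S R f) (hS : S' ⊆ S) (hR : R' ≤ R) : MemX0 S' R' f :=
  ⟨hf.1.mono (prod_mono hS (ball_subset_ball hR)),
    fun t ht => (hf.2 t (hS ht)).mono (ball_subset_ball hR)⟩

lemma MemX0.sub (hf : MemX0 S R f) (hg : MemX0 S R g) : MemX0 S R (f - g) :=
  ⟨hf.1.sub hg.1, fun t ht => (hf.2 t ht).sub (hg.2 t ht)⟩

lemma SolvesLin.mono (hv : SolvesLin S R lam b v) (hS : S' ⊆ S) (hR : R' ≤ R) :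
    SolvesLin S' R' lam b v :=
  fun t ht ht0 x hx => (hv t (hS ht) ht0 x (ball_subset_ball hR hx)).mono hS

lemma SolvesLin.sub (hv : SolvesLin S R lam b v) (hw : SolvesLin S R lam b w)
    (hvX : MemX0 S R v) (hwX : MemX0 S R w) : SolvesLin S R lam b (v - w) := by
  intro t ht ht0 x hx
  have hderiv : deriv ((v - w) t) x = deriv (v t) x - deriv (w t) x :=
    deriv_sub ((hvX.2 t ht).differentiableAt (isOpen_ball.mem_nhds hx))
      ((hwX.2 t ht).differentiableAt (isOpen_ball.mem_nhds hx))
  refine ((hv t ht ht0 x hx).sub (hw t ht ht0 x hx)).congr_deriv ?_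
  rw [hderiv, Pi.sub_apply, Pi.sub_apply]
  ring

/-- The function `t ^ (-μ(x)) v(t, x)`, with `t ^ (-μ(x)) = exp (-μ(x) log t)` as in the singular
Cauchy data of the equation. -/
def powNegMul (μ : ℂ → ℂ) (v : ℝ → ℂ → ℂ) (t : ℝ) (x : ℂ) : ℂ :=
  exp (-(μ x) * (Real.log t : ℂ)) * v t x

lemma powNegMul_sub : powNegMul μ (v - w) = powNegMul μ v - powNegMul μ w := by
  ext t x
  exact mul_sub _ _ _

lemma powNegMul_eq_zero_iff : powNegMul μ v t x = 0 ↔ v t x = 0 := by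
  simp [powNegMul, exp_ne_zero]

lemma MemX0.powNegMul (hS : ∀ t ∈ S, t ≠ 0) (hv : MemX0 S R v)
    (hμ : DifferentiableOn ℂ μ (ball 0 R)) : MemX0 S R (powNegMul μ v) := by
  refine ⟨?_, fun t ht => ((hμ.neg.mul_const _).cexp).mul (hv.2 t ht)⟩
  have hμ' : ContinuousOn (fun p : ℝ × ℂ => μ p.2) (S ×ˢ ball 0 R) :=
    hμ.continuousOn.comp continuousOn_snd fun p hp => hp.2
  have hlog : ContinuousOn (fun p : ℝ × ℂ => (Real.log p.1 : ℂ)) (S ×ˢ ball 0 R) :=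
    continuous_ofReal.comp_continuousOn (continuousOn_fst.log fun p hp => hS p.1 hp.1)
  exact ((hμ'.neg.mul hlog).cexp).mul hv.1

lemma deriv_powNegMul (hμ : DifferentiableAt ℂ μ x) (hv : DifferentiableAt ℂ (v t) x) :
    deriv (powNegMul μ v t) x = exp (-(μ x) * (Real.log t : ℂ)) * deriv (v t) x -
      deriv μ x * Real.log t * powNegMul μ v t x := by
  refine (((hμ.hasDerivAt.neg.mul_const (Real.log t : ℂ)).cexp).mul hv.hasDerivAt).deriv.trans ?_
  simp only [powNegMul, Pi.neg_apply]
  ring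

lemma SolvesLin.hasDerivWithinAt_powNegMul (hsol : SolvesLin S R lam b v) (ht : t ∈ S)
    (ht0 : 0 < t) (hx : x ∈ ball 0 R) (hμ : DifferentiableAt ℂ μ x)
    (hv : DifferentiableAt ℂ (v t) x) :
    HasDerivWithinAt (fun s => powNegMul μ v s x)
      (((lam t x - μ x + b t x * (deriv μ x * Real.log t)) * powNegMul μ v t x +
        b t x * deriv (powNegMul μ v t) x) / t) S t := by
  have hexp := (((Real.hasDerivAt_log ht0.ne').ofReal_comp.const_mul
    (-(μ x))).cexp).hasDerivWithinAt (s := S)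
  refine (hexp.mul (hsol t ht ht0 x hx)).congr_deriv ?_
  have htc : (t : ℂ) ≠ 0 := ofReal_ne_zero.2 ht0.ne'
  rw [deriv_powNegMul hμ hv, powNegMul]
  push_cast
  field_simp
  ring

lemma one_le_abs_log (ht0 : 0 < t) (ht : t ≤ Real.exp (-1)) : 1 ≤ |Real.log t| :=
  le_abs.2 (.inr (by linarith [(Real.log_le_iff_le_exp ht0).2 ht]))

/-- The bound on `b` beats the factor `log t` produced by differentiating `t ^ (-μ(x))` in `x`. -/
lemma norm_mul_add_mul_le {a β d U V : ℂ} {l A : ℝ} (hl : 1 ≤ |l|) (ha : ‖a‖ ≤ A)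
    (hβ : ‖β‖ ≤ B / |l|) (hd : ‖d‖ ≤ L) :
    ‖(a + β * (d * l)) * U + β * V‖ ≤ (A + B * L + B) * (‖U‖ + ‖V‖) := by
  have hβl : ‖β‖ * |l| ≤ B := (le_div_iff₀ (one_pos.trans_le hl)).1 hβ
  have hβB : ‖β‖ ≤ B := (le_mul_of_one_le_right (norm_nonneg _) hl).trans hβl
  have hA : 0 ≤ A := (norm_nonneg _).trans ha
  have hB : 0 ≤ B := (norm_nonneg _).trans hβB
  have hL : 0 ≤ L := (norm_nonneg _).trans hd
  have hcoeff : ‖a + β * (d * l)‖ ≤ A + B * L := by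
    calc ‖a + β * (d * l)‖ ≤ ‖a‖ + ‖β * (d * l)‖ := norm_add_le _ _
      _ = ‖a‖ + ‖β‖ * |l| * ‖d‖ := by
          rw [norm_mul, norm_mul, norm_real, Real.norm_eq_abs]; ring
      _ ≤ A + B * L := by gcongr
  calc ‖(a + β * (d * l)) * U + β * V‖
      ≤ ‖a + β * (d * l)‖ * ‖U‖ + ‖β‖ * ‖V‖ := by
        simpa only [norm_mul] using norm_add_le ((a + β * (d * l)) * U) (β * V)
    _ ≤ (A + B * L + B) * ‖U‖ + (A + B * L + B) * ‖V‖ := by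
        gcongr
        · linarith
        · exact hβB.trans (le_add_of_nonneg_left (by positivity))
    _ = (A + B * L + B) * (‖U‖ + ‖V‖) := by ring

lemma SolvesLin.nagumoBound (hsol : SolvesLin (Ioc 0 T) R lam b v) (hv : MemX0 (Ioc 0 T) R v)
    (hT : T ≤ Real.exp (-1)) (hR : 0 < R) (hm : ContinuousOn m (Ioc 0 T))
    (hμ : DifferentiableOn ℂ μ (ball 0 R)) (hL : ∀ x ∈ ball 0 R, ‖deriv μ x‖ ≤ L)
    (hlam : ∀ t ∈ Ioc 0 T, ∀ x ∈ ball 0 R, ‖lam t x - μ x‖ ≤ Λ * m t)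
    (hb : ∀ t ∈ Ioc 0 T, ∀ x ∈ ball 0 R, ‖b t x‖ ≤ B * m t / |Real.log t|) :
    NagumoBound (Ioc 0 T) 0 R (fun t => (Λ + B * L + B) * (m t / t)) (powNegMul μ v) := by
  have hu := hv.powNegMul (fun t ht => ht.1.ne') hμ
  have hlog : ∀ t ∈ Ioc 0 T, 1 ≤ |Real.log t| := fun t ht => one_le_abs_log ht.1 (ht.2.trans hT)
  have hrate : ∀ t, (Λ + B * L + B) * (m t / t) = (Λ * m t + B * m t * L + B * m t) / t :=
    fun t => by ring
  refine ⟨continuousOn_const.mul (hm.div continuousOn_id fun t ht => ht.1.ne'), fun t ht => ?_,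
    hu.1, hu.2, fun t ht x hx => ⟨_, hsol.hasDerivWithinAt_powNegMul ht ht.1 hx
      (hμ.differentiableAt (isOpen_ball.mem_nhds hx))
      ((hv.2 t ht).differentiableAt (isOpen_ball.mem_nhds hx)), ?_⟩⟩
  · have h0 : (0 : ℂ) ∈ ball 0 R := mem_ball_self hR
    have hΛm : 0 ≤ Λ * m t := (norm_nonneg _).trans (hlam t ht 0 h0)
    have hBm : 0 ≤ B * m t := by
      have hquot := (norm_nonneg _).trans (hb t ht 0 h0)
      rwa [le_div_iff₀ (one_pos.trans_le (hlog t ht)), zero_mul] at hquot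
    have hL0 : 0 ≤ L := (norm_nonneg _).trans (hL 0 h0)
    have ht0 := ht.1
    rw [hrate]
    positivity
  · rw [norm_div, norm_real, Real.norm_of_nonneg ht.1.le, hrate, div_mul_eq_mul_div]
    have ht0 := ht.1
    gcongr
    exact norm_mul_add_mul_le (hlog t ht) (hlam t ht x hx) (hb t ht x hx) (hL x hx)

lemma exists_nagumoBound {T₀ R₀ : ℝ} (hT₀ : 0 < T₀) (hR₀ : 0 < R₀)
    (hm : ContinuousOn m (Ioc 0 T₀)) (hint : IntegrableOn (fun τ => m τ / τ) (Ioc 0 T₀))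
    (hμ : DifferentiableOn ℂ μ (ball 0 R₀))
    (hlam : ∀ t ∈ Ioc 0 T₀, ∀ x ∈ ball 0 R₀, ‖lam t x - μ x‖ ≤ Λ * m t)
    (hb : ∀ t ∈ Ioc 0 T₀, ∀ x ∈ ball 0 R₀, ‖b t x‖ ≤ B * m t / |Real.log t|) :
    ∃ k : ℝ → ℝ, ∃ T₂ > 0, ∃ R₂ > 0, IntegrableOn k (Ioc 0 T₂) ∧
      ∀ T ≤ T₂, ∀ R ≤ R₂, 0 < R → ∀ v, MemX0 (Ioc 0 T) R v → SolvesLin (Ioc 0 T) R lam b v →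
        NagumoBound (Ioc 0 T) 0 R k (powNegMul μ v) := by
  obtain ⟨L, hL⟩ := exists_norm_deriv_le_of_differentiableOn_ball hμ (half_lt_self hR₀)
  refine ⟨fun t => (Λ + B * L + B) * (m t / t), min T₀ (Real.exp (-1)),
    lt_min hT₀ (Real.exp_pos _), R₀ / 2, half_pos hR₀, ?_, fun T hT R hR hR0 v hv hsol => ?_⟩
  · exact (hint.mono_set (Ioc_subset_Ioc_right (min_le_left _ _))).const_mul _
  · have hsub : Ioc 0 T ⊆ Ioc 0 T₀ := Ioc_subset_Ioc_right (hT.trans (min_le_left _ _))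
    have hball : ball (0 : ℂ) R ⊆ ball 0 R₀ := ball_subset_ball (hR.trans (half_le_self hR₀.le))
    exact hsol.nagumoBound hv (hT.trans (min_le_right _ _)) hR0 (hm.mono hsub) (hμ.mono hball)
      (fun x hx => hL x (ball_subset_ball hR hx))
      (fun t ht x hx => hlam t (hsub ht) x (hball hx))
      fun t ht x hx => hb t (hsub ht) x (hball hx)

lemma NagumoBound.exists_forall_eq {k : ℝ → ℝ} {ψ : ℂ → ℂ}
    (hbound : NagumoBound (Ioc 0 T) 0 R k (powNegMul μ (v - w))) (hT : 0 < T)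
    (hint : IntegrableOn k (Ioc 0 T)) (hR : 0 < R)
    (hv : TendstoUniformlyOn (powNegMul μ v) ψ (𝓝[>] 0) (ball 0 R))
    (hw : TendstoUniformlyOn (powNegMul μ w) ψ (𝓝[>] 0) (ball 0 R)) :
    ∃ ε > 0, ∃ δ > 0, ∀ t ∈ Ioc 0 ε, ∀ x ∈ ball 0 δ, v t x = w t x := by
  have hlim : TendstoUniformlyOn (powNegMul μ (v - w)) 0 (𝓝[>] 0) (ball 0 R) := by
    rw [powNegMul_sub, ← sub_self ψ]
    exact hv.sub hw
  obtain ⟨ε, hε, δ, hδ, hzero⟩ := hbound.exists_forall_eq_zero hT hint hR hlim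
  exact ⟨ε, hε.1, δ, hδ, fun t ht x hx =>
    sub_eq_zero.1 (powNegMul_eq_zero_iff.1 (hzero t ht x hx))⟩

end LinearEquation

theorem statement14_general {T₀ R₀ T₁ R₁ Λ B : ℝ} {m : ℝ → ℝ} {μ : ℂ → ℂ}
    {lam b v : ℝ → ℂ → ℂ} (hT₀ : 0 < T₀) (hR₀ : 0 < R₀)
    (hm : ContinuousOn m (Ioc 0 T₀)) (hint : IntegrableOn (fun τ => m τ / τ) (Ioc 0 T₀))
    (hμ : DifferentiableOn ℂ μ (ball 0 R₀))
    (hlam : ∀ t ∈ Ioc 0 T₀, ∀ x ∈ ball 0 R₀, ‖lam t x - μ x‖ ≤ Λ * m t)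
    (hb : ∀ t ∈ Ioc 0 T₀, ∀ x ∈ ball 0 R₀, ‖b t x‖ ≤ B * m t / |Real.log t|)
    (hT₁ : 0 < T₁) (hR₁ : 0 < R₁) (hv : MemX0 (Ioc 0 T₁) R₁ v)
    (hvsol : SolvesLin (Ioc 0 T₁) R₁ lam b v) :
    ∃ δ > 0, ∃ ψ : ℂ → ℂ, DifferentiableOn ℂ ψ (ball 0 δ) ∧
      TendstoUniformlyOn (powNegMul μ v) ψ (𝓝[>] 0) (ball 0 δ) ∧
      ∀ T' R' : ℝ, 0 < T' → 0 < R' → ∀ w : ℝ → ℂ → ℂ, MemX0 (Ioc 0 T') R' w →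
        SolvesLin (Ioc 0 T') R' lam b w →
        TendstoUniformlyOn (powNegMul μ w) ψ (𝓝[>] 0) (ball 0 (min δ R')) →
        ∃ ε > 0, ∃ δ' > 0, ∀ t ∈ Ioc 0 ε, ∀ x ∈ ball 0 δ', w t x = v t x := by
  obtain ⟨k, T₂, hT₂, R₂, hR₂, hkint, hbound⟩ := exists_nagumoBound hT₀ hR₀ hm hint hμ hlam hb
  have hbound_v : NagumoBound (Ioc 0 (min T₁ T₂)) 0 (min R₁ R₂) k (powNegMul μ v) :=
    have hsub := Ioc_subset_Ioc_right (min_le_left T₁ T₂)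
    hbound _ (min_le_right _ _) _ (min_le_right _ _) (lt_min hR₁ hR₂) v
      (hv.mono hsub (min_le_left _ _)) (hvsol.mono hsub (min_le_left _ _))
  obtain ⟨δ, hδ, ψ, hψ, hvlim⟩ := hbound_v.exists_tendstoUniformlyOn (lt_min hT₁ hT₂)
    (hkint.mono_set (Ioc_subset_Ioc_right (min_le_right _ _))) (lt_min hR₁ hR₂)
  refine ⟨δ, hδ, ψ, hψ, hvlim, fun T' R' hT' hR' w hw hwsol hwlim => ?_⟩
  obtain ⟨T, hT, hTT₁, hTT', hTT₂⟩ : ∃ T > 0, T ≤ T₁ ∧ T ≤ T' ∧ T ≤ T₂ :=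
    ⟨min T₁ (min T' T₂), by positivity, by simp⟩
  obtain ⟨R, hR, hRR₁, hRδ, hRR₂⟩ : ∃ R > 0, R ≤ R₁ ∧ R ≤ min δ R' ∧ R ≤ R₂ :=
    ⟨min R₁ (min (min δ R') R₂), by positivity, by simp⟩
  have hsub₁ : Ioc 0 T ⊆ Ioc 0 T₁ := Ioc_subset_Ioc_right hTT₁
  have hsub' : Ioc 0 T ⊆ Ioc 0 T' := Ioc_subset_Ioc_right hTT'
  have hRR' : R ≤ R' := hRδ.trans (min_le_right _ _)
  have hvX := hv.mono hsub₁ hRR₁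
  have hwX := hw.mono hsub' hRR'
  have hdiff := (hwsol.mono hsub' hRR').sub (hvsol.mono hsub₁ hRR₁) hwX hvX
  exact (hbound T hTT₂ R hRR₂ hR _ (hwX.sub hvX) hdiff).exists_forall_eq hT
    (hkint.mono_set (Ioc_subset_Ioc_right hTT₂)) hR (hwlim.mono (ball_subset_ball hRδ))
    (hvlim.mono (ball_subset_ball (hRδ.trans (min_le_left _ _))))

/-- Lemma 6.2.1 (2): under `Re λ(0,0) > 0`, `|λ(t,x)-λ(0,x)| ≤ Λ m(t)` and
`|b| ≤ B m(t)/|log t|`, every solution `v ∈ X₁((0,T₁]×D_{R₁})` of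
`t ∂v/∂t - λ v - b ∂v/∂x = 0` satisfies `v = V(ψ)` near the origin for some
holomorphic germ `ψ`; in particular `t^{-λ(0,x)} v(t,x)` converges uniformly near
`x = 0` to a holomorphic function as `t → 0⁺`. -/
theorem statement14
    (T₀ R₀ : ℝ) (hT₀ : 0 < T₀) (hT₀e : T₀ < 1 / Real.exp 1) (hR₀ : 0 < R₀)
    (m : ℝ → ℝ) (hm : IsWeight T₀ m)
    (lam b : ℝ → ℂ → ℂ)
    (hlamX : MemX0 (Set.Icc 0 T₀) R₀ lam) (hbX : MemX0 (Set.Icc 0 T₀) R₀ b)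
    (hre : 0 < (lam 0 0).re)
    (Λ₁ : ℝ) (hΛ₁ : 0 < Λ₁)
    (hc2 : ∀ t ∈ Set.Ioc (0:ℝ) T₀, ∀ x ∈ Metric.ball (0:ℂ) R₀,
      ‖lam t x - lam 0 x‖ ≤ Λ₁ * m t)
    (B : ℝ) (hB : 0 < B)
    (hc3 : ∀ t ∈ Set.Ioc (0:ℝ) T₀, ∀ x ∈ Metric.ball (0:ℂ) R₀,
      ‖b t x‖ ≤ B * m t / |Real.log t|)
    (T₁ R₁ : ℝ) (hT₁ : 0 < T₁) (hT₁T₀ : T₁ ≤ T₀) (hR₁ : 0 < R₁) (hR₁R₀ : R₁ ≤ R₀)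
    (v : ℝ → ℂ → ℂ) (hv : MemX1 (Set.Ioc 0 T₁) R₁ v)
    (hvsol : SolvesLin (Set.Ioc 0 T₁) R₁ lam b v) :
    ∃ δ > (0:ℝ), ∃ ψ : ℂ → ℂ,
      DifferentiableOn ℂ ψ (Metric.ball (0:ℂ) δ) ∧
      -- `t^{-λ(0,x)} v(t,x) → ψ(x)` uniformly on `D_δ` :
      TendstoUniformlyOn
        (fun t x => Complex.exp (-(lam 0 x) * (Real.log t : ℂ)) * v t x) ψ
        (nhdsWithin 0 (Set.Ioi 0)) (Metric.ball (0:ℂ) δ) ∧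
      -- hence `v = V(ψ)` near the origin : any solution with the same singular
      -- Cauchy data `ψ` coincides with `v` on some `(0,ε] × D_{δ'}` :
      (∀ T' R' : ℝ, 0 < T' → 0 < R' → ∀ w : ℝ → ℂ → ℂ,
        MemX1 (Set.Ioc 0 T') R' w → SolvesLin (Set.Ioc 0 T') R' lam b w →
        TendstoUniformlyOn
          (fun t x => Complex.exp (-(lam 0 x) * (Real.log t : ℂ)) * w t x) ψ
          (nhdsWithin 0 (Set.Ioi 0)) (Metric.ball (0:ℂ) (min δ R')) →
        ∃ ε > (0:ℝ), ∃ δ' > (0:ℝ), ∀ t ∈ Set.Ioc (0:ℝ) ε, ∀ x ∈ Metric.ball (0:ℂ) δ',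
          w t x = v t x) := by
  obtain ⟨δ, hδ, ψ, hψ, hlim, huniq⟩ := statement14_general hT₀ hR₀ hm.2.1 hm.2.2.2
    (hlamX.2 0 ⟨le_rfl, hT₀.le⟩) hc2 hc3 hT₁ hR₁ hv.1 hvsol
  exact ⟨δ, hδ, ψ, hψ, hlim, fun T' R' hT' hR' w hw => huniq T' R' hT' hR' w hw.1⟩
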